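/- arXiv:2604.12989 — 3 statements merged into one kernel-verified Lean document; each statement's English description precedes it below -/
import Mathlib

section
/- Assume 0 < q_i(v) < 1 for every i ∈ {1,…,L} and v ∈ 𝒱. Let B ≥ 1 with B ≤ N, and let T_B be a set of exactly B prefixes such that q(u) ≥ q(w) for every u ∈ T_B and every prefix w ∉ T_B. Then T_B is a valid draft tree, and for every valid draft tree T with |T| ≤ B one has E_{Y∼Q}[α_T(Y)] ≤ E_{Y∼Q}[α_{T_B}(Y)]; that is, T_B maximizes the surrogate expected acceptance length among all valid draft trees with at most B nodes. -/
/-- Prefix mass starting at (1-based) depth `d`. -/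
noncomputable def mass {V : Type*} (q : ℕ → V → ℝ) : ℕ → List V → ℝ
  | _, [] => 1
  | d, a :: l => q d a * mass q (d + 1) l

/-- A valid draft tree: a finite set of prefixes (tuples of length between 1 and `L`)
that is prefix-closed. -/
def ValidTree {V : Type*} (L : ℕ) (T : Finset (List V)) : Prop :=
  (∀ u ∈ T, 1 ≤ u.length ∧ u.length ≤ L) ∧
  (∀ u ∈ T, 2 ≤ u.length → u.dropLast ∈ T)

/-- Acceptance length. -/
def accLen {V : Type*} [DecidableEq V] {L : ℕ} (T : Finset (List V)) (y : Fin L → V) : ℕ :=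
  ((Finset.Icc 1 L).filter (fun d => (List.ofFn y).take d ∈ T)).sup id

lemma mass_append {V : Type*} (q : ℕ → V → ℝ) (l m : List V) (d : ℕ) :
    mass q d (l ++ m) = mass q d l * mass q (d + l.length) m := by
  induction l generalizing d with
  | nil => simp [mass]
  | cons a l ih =>
    simp only [List.cons_append, mass, ih, List.length_cons]
    rw [show d + 1 + l.length = d + (l.length + 1) by omega]
    ring

lemma mass_pos {V : Type*} (q : ℕ → V → ℝ) (L : ℕ)
    (hq0 : ∀ i ∈ Finset.Icc 1 L, ∀ v : V, 0 < q i v ∧ q i v < 1) (l : List V) (d : ℕ)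
    (hd : 1 ≤ d) (h : d + l.length ≤ L + 1) : 0 < mass q d l := by
  induction l generalizing d with
  | nil => simp [mass]
  | cons a l ih =>
    simp only [List.length_cons] at h
    simp only [mass]
    exact mul_pos (hq0 d (Finset.mem_Icc.2 ⟨hd, by omega⟩) a).1 (ih (d + 1) (by omega) (by omega))

lemma sum_mass_prefix {V : Type*} [Fintype V] [DecidableEq V] (q : ℕ → V → ℝ) (n : ℕ) (k : ℕ)
    (hq1 : ∀ i, k ≤ i → i < k + n → ∑ v : V, q i v = 1) (u : List V) (hu : u.length ≤ n) :
    ∑ y : Fin n → V, mass q k (List.ofFn y) *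
      (if (List.ofFn y).take u.length = u then (1 : ℝ) else 0) = mass q k u := by
  induction n generalizing k u with
  | zero =>
    have : u = [] := List.length_eq_zero_iff.1 (by omega)
    subst this
    simp [mass]
  | succ n ih =>
    have ih' := ih (k + 1) (fun i h1 h2 => hq1 i (by omega) (by omega))
    rw [← (Fin.consEquiv (fun _ : Fin (n + 1) => V)).sum_comp, Fintype.sum_prod_type]
    have hc : ∀ (v : V) (y : Fin n → V),
        List.ofFn ((Fin.consEquiv (fun _ : Fin (n + 1) => V)) (v, y)) = v :: List.ofFn y := by
      intro v y
      simp [Fin.consEquiv, List.ofFn_succ]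
    simp only [hc, mass]
    cases u with
    | nil =>
      have h0 := ih' [] (by simp)
      simp only [List.length_nil, List.take_zero, if_true, mul_one, mass] at h0 ⊢
      simp only [← Finset.mul_sum, h0, mul_one]
      exact hq1 k le_rfl (by omega)
    | cons a u =>
      have h0 := ih' u (by simpa using hu)
      simp only [List.length_cons, List.take_succ_cons, List.cons.injEq, mass]
      rw [Finset.sum_eq_single a]
      · simp only [true_and, mul_assoc, ← Finset.mul_sum, h0]
      · intro b _ hb
        simp [hb]
      · simp

lemma accLen_eq {V : Type*} [DecidableEq V] {L : ℕ} (T : Finset (List V)) (hT : ValidTree L T)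
    (y : Fin L → V) :
    (accLen T y : ℝ) =
      ∑ u ∈ T, (if (List.ofFn y).take u.length = u then (1 : ℝ) else 0) := by
  rw [Finset.sum_boole]
  norm_cast
  set S := (Finset.Icc 1 L).filter (fun d => (List.ofFn y).take d ∈ T) with hS
  have hlen : (List.ofFn y).length = L := by simp
  have hdown : ∀ d e : ℕ, d + e ∈ S → 1 ≤ d → d ∈ S := by
    intro d e
    induction e with
    | zero => intro h _; exact h
    | succ e ih =>
      intro h hd
      apply ih _ hd
      simp only [hS, Finset.mem_filter, Finset.mem_Icc] at h ⊢
      refine ⟨⟨by omega, by omega⟩, ?_⟩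
      have h2 := hT.2 _ h.2 (by rw [List.length_take, hlen]; omega)
      rw [List.dropLast_eq_take, List.take_take, List.length_take, hlen] at h2
      convert h2 using 2
      omega
  have hSI : S = Finset.Icc 1 (S.sup id) := by
    ext d
    constructor
    · intro h
      have h1 : id d ≤ S.sup id := Finset.le_sup h
      simp only [id] at h1
      have h2 := (Finset.mem_Icc.1 (Finset.mem_filter.1 h).1).1
      exact Finset.mem_Icc.2 ⟨h2, h1⟩
    · intro h
      have h1 := Finset.mem_Icc.1 h
      have hne : S.Nonempty := by
        by_contra hn
        rw [Finset.not_nonempty_iff_eq_empty] at hn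
        rw [hn] at h1
        simp at h1
        omega
      obtain ⟨m, hm, hmm⟩ := Finset.exists_mem_eq_sup S hne id
      simp only [id] at hmm
      apply hdown d (m - d) _ h1.1
      rw [show d + (m - d) = m by omega]
      exact hm
  have hcard : accLen T y = S.card := by
    have : S.card = S.sup id := by
      conv_lhs => rw [hSI]
      simp
    rw [this, accLen]
  rw [hcard]
  refine Finset.card_bij (fun d _ => (List.ofFn y).take d) ?_ ?_ ?_
  · intro d hd
    have h := Finset.mem_filter.1 hd
    have h1 := Finset.mem_Icc.1 h.1
    refine Finset.mem_filter.2 ⟨h.2, ?_⟩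
    rw [List.length_take, hlen, min_eq_left h1.2]
  · intro d hd e he hde
    have h1 := Finset.mem_Icc.1 (Finset.mem_filter.1 hd).1
    have h2 := Finset.mem_Icc.1 (Finset.mem_filter.1 he).1
    have := congrArg List.length hde
    simp only [List.length_take, hlen] at this
    omega
  · intro u hu
    have h := Finset.mem_filter.1 hu
    exact ⟨u.length, Finset.mem_filter.2 ⟨Finset.mem_Icc.2 (hT.1 u h.1), by rw [h.2]; exact h.1⟩, h.2⟩

lemma objective_eq {V : Type*} [Fintype V] [DecidableEq V] (L : ℕ) (q : ℕ → V → ℝ)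
    (hq1 : ∀ i ∈ Finset.Icc 1 L, ∑ v : V, q i v = 1)
    (T : Finset (List V)) (hT : ValidTree L T) :
    ∑ y : Fin L → V, mass q 1 (List.ofFn y) * (accLen T y : ℝ) = ∑ u ∈ T, mass q 1 u := by
  simp only [accLen_eq T hT, Finset.mul_sum]
  rw [Finset.sum_comm]
  refine Finset.sum_congr rfl fun u hu => ?_
  exact sum_mass_prefix q L 1 (fun i h1 h2 => hq1 i (Finset.mem_Icc.2 ⟨h1, by omega⟩)) u (hT.1 u hu).2

lemma sum_exchange {α : Type*} [DecidableEq α] (f : α → ℝ) (S T : Finset α)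
    (hc : T.card ≤ S.card) (hpos : ∀ u ∈ S, 0 ≤ f u)
    (h : ∀ u ∈ S, ∀ w ∈ T, w ∉ S → f w ≤ f u) : ∑ u ∈ T, f u ≤ ∑ u ∈ S, f u := by
  have hc' : (T \ S).card ≤ (S \ T).card := Finset.card_sdiff_le_card_sdiff_iff.2 hc
  have key : ∑ u ∈ T \ S, f u ≤ ∑ u ∈ S \ T, f u := by
    rcases (S \ T).eq_empty_or_nonempty with he | hne
    · rw [he] at hc' ⊢
      have : T \ S = ∅ := Finset.card_eq_zero.1 (by simpa using hc')
      rw [this]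
    · obtain ⟨m, hm, hmin⟩ := Finset.exists_min_image (S \ T) f hne
      have hmS := (Finset.mem_sdiff.1 hm).1
      calc ∑ u ∈ T \ S, f u ≤ (T \ S).card • f m := Finset.sum_le_card_nsmul _ _ _ fun w hw =>
            h m hmS w (Finset.mem_sdiff.1 hw).1 (Finset.mem_sdiff.1 hw).2
        _ ≤ (S \ T).card • f m := nsmul_le_nsmul_left (hpos m hmS) hc'
        _ ≤ ∑ u ∈ S \ T, f u := Finset.card_nsmul_le_sum _ _ _ hmin
  have h1 := Finset.sum_inter_add_sum_sdiff S T f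
  have h2 := Finset.sum_inter_add_sum_sdiff T S f
  rw [Finset.inter_comm] at h2
  linarith

/-- Proposition: the top-`B` prefixes form an optimal valid draft tree.
Assuming `0 < qᵢ(v) < 1` everywhere, if `T_B` is a set of exactly `B` prefixes
(`1 ≤ B ≤ N`, `N = ∑_{d=1}^{L} |𝒱|^d`) whose masses dominate those of all non-member
prefixes, then `T_B` is a valid draft tree and it maximizes the surrogate expected
acceptance length among all valid draft trees with at most `B` nodes. -/
theorem top_B_tree_valid_and_optimal {V : Type*} [Fintype V] [DecidableEq V] [Nonempty V]
    (L : ℕ) (hL : 1 ≤ L) (q : ℕ → V → ℝ)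
    (hq0 : ∀ i ∈ Finset.Icc 1 L, ∀ v : V, 0 < q i v ∧ q i v < 1)
    (hq1 : ∀ i ∈ Finset.Icc 1 L, ∑ v : V, q i v = 1)
    (B : ℕ) (hB : 1 ≤ B) (hBN : B ≤ ∑ d ∈ Finset.Icc 1 L, Fintype.card V ^ d)
    (T_B : Finset (List V)) (hcard : T_B.card = B)
    (hTpre : ∀ u ∈ T_B, 1 ≤ u.length ∧ u.length ≤ L)
    (hTop : ∀ u ∈ T_B, ∀ w : List V, 1 ≤ w.length → w.length ≤ L → w ∉ T_B →
      mass q 1 w ≤ mass q 1 u) :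
    ValidTree L T_B ∧
    ∀ T : Finset (List V), ValidTree L T → T.card ≤ B →
      ∑ y : Fin L → V, mass q 1 (List.ofFn y) * (accLen T y : ℝ)
        ≤ ∑ y : Fin L → V, mass q 1 (List.ofFn y) * (accLen T_B y : ℝ) := by
  have hvalid : ValidTree L T_B := by
    refine ⟨hTpre, fun u hu h2 => ?_⟩
    by_contra hn
    have hL' := (hTpre u hu).2
    have hl : u.dropLast.length = u.length - 1 := List.length_dropLast
    have hle := hTop u hu u.dropLast (by omega) (by omega) hn
    have hne : u ≠ [] := by
      rintro rfl
      simp at h2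
    have hm : mass q 1 u = mass q 1 u.dropLast * q (1 + (u.length - 1)) (u.getLast hne) := by
      conv_lhs => rw [← List.dropLast_append_getLast hne, mass_append]
      simp [mass]
    have hp : 0 < mass q 1 u.dropLast := mass_pos q L hq0 _ 1 le_rfl (by omega)
    have hlt := (hq0 (1 + (u.length - 1)) (Finset.mem_Icc.2 ⟨by omega, by omega⟩)
      (u.getLast hne)).2
    rw [hm] at hle
    nlinarith
  refine ⟨hvalid, fun T hT hTc => ?_⟩
  rw [objective_eq L q hq1 T hT, objective_eq L q hq1 T_B hvalid]
  refine sum_exchange _ _ _ (by omega) (fun u hu => ?_) (fun u hu w hw hwn => ?_)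
  · exact (mass_pos q L hq0 u 1 le_rfl (by have := (hTpre u hu).2; omega)).le
  · exact hTop u hu w (hT.1 w hw).1 (hT.1 w hw).2 hwn
end

section
/- Assume 0 < q_i(v) < 1 for every i ∈ {1,…,L} and v ∈ 𝒱. Let B ≥ 1 with B < N, and set K = min(B, |𝒱|). Then there exists a valid draft tree T* with |T*| ≤ B that maximizes the surrogate expected acceptance length E_{Y∼Q}[α_T(Y)] among all valid draft trees T with |T| ≤ B, and such that every node of T* lies in S_K, i.e. every node of T* uses only the top-K tokens at each depth. -/
/-- Membership in `S_K`: `u` is a prefix (length in `{1,…,L}`) whose token at each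
(1-based) depth `j` has rank at most `K` in the enumeration `vEnum`. -/
def inSK {V : Type*} (vEnum : ℕ → ℕ → V) (L K : ℕ) (u : List V) : Prop :=
  1 ≤ u.length ∧ u.length ≤ L ∧
  ∀ j : Fin u.length, ∃ k, 1 ≤ k ∧ k ≤ K ∧ vEnum ((j : ℕ) + 1) k = u.get j


theorem aux_sum_prefix {V : Type*} [Fintype V] [DecidableEq V] (q : ℕ → V → ℝ) :
    ∀ (n d : ℕ) (u : List V), (∀ i, d ≤ i → i < d + n → ∑ v : V, q i v = 1) → u.length ≤ n →
      ∑ y : Fin n → V, (if u <+: List.ofFn y then mass q d (List.ofFn y) else 0) = mass q d u := by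
  intro n
  induction n with
  | zero =>
    intro d u _ hu
    have : u = [] := List.length_eq_zero_iff.mp (by omega)
    subst this
    simp [mass]
  | succ n ih =>
    intro d u h hu
    rw [← (Fin.consEquiv (fun _ : Fin (n+1) => V)).sum_comp, Fintype.sum_prod_type]
    have h' : ∀ i, d + 1 ≤ i → i < d + 1 + n → ∑ v : V, q i v = 1 :=
      fun i h1 h2 => h i (by omega) (by omega)
    have hof : ∀ (a : V) (y : Fin n → V),
        List.ofFn ((Fin.consEquiv (fun _ : Fin (n+1) => V)) (a, y)) = a :: List.ofFn y := by
      intro a y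
      simp [List.ofFn_succ, Fin.consEquiv]
    simp only [hof]
    cases u with
    | nil =>
      have := ih (d+1) [] h' (by simp)
      simp only [List.nil_prefix, if_true, mass] at this ⊢
      simp only [← Finset.mul_sum, this, mul_one]
      exact h d (by omega) (by omega)
    | cons a l =>
      have := ih (d+1) l h' (by simpa using hu)
      simp only [mass, List.cons_prefix_cons]
      rw [Finset.sum_eq_single a]
      · rw [← this, Finset.mul_sum]
        simp
      · intro b _ hb
        simp [Ne.symm hb]
      · simp

theorem aux_take_mem {V : Type*} {L : ℕ} {T : Finset (List V)} (hT : ValidTree L T)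
    (l : List V) (m : ℕ) : l.take m ∈ T → m ≤ l.length → ∀ d, 1 ≤ d → d ≤ m → l.take d ∈ T := by
  intro h hm d hd hdm
  induction m with
  | zero => omega
  | succ m ih =>
    rcases Nat.lt_or_ge m d with h1 | h1
    · have : d = m + 1 := by omega
      rwa [this]
    · refine ih ?_ (by omega) h1
      have := hT.2 _ h (by rw [List.length_take]; omega)
      rw [List.dropLast_eq_take, List.take_take, List.length_take] at this
      have e : min (min (m+1) l.length - 1) (m+1) = m := by omega
      rwa [e] at this

theorem aux_accLen {V : Type*} [DecidableEq V] {L : ℕ} {T : Finset (List V)} (hT : ValidTree L T)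
    (y : Fin L → V) : accLen T y = (T.filter (fun u => u <+: List.ofFn y)).card := by
  have h1 : (T.filter (fun u => u <+: List.ofFn y)).card =
      ((Finset.Icc 1 L).filter (fun d => (List.ofFn y).take d ∈ T)).card := by
    symm
    apply Finset.card_bij (fun d _ => (List.ofFn y).take d)
    · intro d hd
      rw [Finset.mem_filter] at hd ⊢
      exact ⟨hd.2, List.take_prefix _ _⟩
    · intro a ha b hb hab
      simp only [Finset.mem_filter, Finset.mem_Icc] at ha hb
      have := congrArg List.length hab
      simp only [List.length_take, List.length_ofFn] at this
      omega
    · intro u hu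
      rw [Finset.mem_filter] at hu
      have e := List.prefix_iff_eq_take.mp hu.2
      refine ⟨u.length, ?_, e.symm⟩
      rw [Finset.mem_filter, Finset.mem_Icc, ← e]
      exact ⟨hT.1 u hu.1, hu.1⟩
  rw [h1]
  unfold accLen
  set S := (Finset.Icc 1 L).filter (fun d => (List.ofFn y).take d ∈ T) with hS
  have h2 : S = Finset.Icc 1 (S.sup id) := by
    rcases S.eq_empty_or_nonempty with he | hne
    · simp [he]
    · obtain ⟨m, hm, hme⟩ := Finset.exists_mem_eq_sup S hne id
      ext d
      rw [Finset.mem_Icc]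
      constructor
      · intro hd
        have hd' := hd
        rw [hS, Finset.mem_filter, Finset.mem_Icc] at hd'
        exact ⟨hd'.1.1, Finset.le_sup (f := id) hd⟩
      · rintro ⟨ha, hb⟩
        rw [hme] at hb
        simp only [id] at hb
        rw [hS, Finset.mem_filter, Finset.mem_Icc] at hm ⊢
        exact ⟨⟨ha, by omega⟩, aux_take_mem hT _ m hm.2 (by simpa using hm.1.2) d ha hb⟩
  conv_rhs => rw [h2]
  simp

theorem aux_obj {V : Type*} [Fintype V] [DecidableEq V] {L : ℕ} (q : ℕ → V → ℝ)
    (hq1 : ∀ i ∈ Finset.Icc 1 L, ∑ v : V, q i v = 1) {T : Finset (List V)} (hT : ValidTree L T) :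
    ∑ y : Fin L → V, mass q 1 (List.ofFn y) * (accLen T y : ℝ) = ∑ u ∈ T, mass q 1 u := by
  have : ∀ u ∈ T, mass q 1 u =
      ∑ y : Fin L → V, (if u <+: List.ofFn y then mass q 1 (List.ofFn y) else 0) := by
    intro u hu
    rw [aux_sum_prefix q L 1 u _ (hT.1 u hu).2]
    intro i h1 h2
    exact hq1 i (Finset.mem_Icc.mpr ⟨h1, by omega⟩)
  rw [Finset.sum_congr rfl this, Finset.sum_comm]
  refine Finset.sum_congr rfl fun y _ => ?_
  rw [aux_accLen hT, ← Finset.sum_filter, Finset.sum_const, nsmul_eq_mul, mul_comm]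

/-- Sum of ranks along a prefix. -/
def auxRsum {V : Type*} (r : ℕ → V → ℕ) : ℕ → List V → ℕ
  | _, [] => 0
  | d, a :: l => r d a + auxRsum r (d + 1) l

theorem aux_mass_pos {V : Type*} (q : ℕ → V → ℝ) : ∀ (u : List V) (d : ℕ),
    (∀ i, d ≤ i → i < d + u.length → ∀ v, 0 < q i v) → 0 < mass q d u := by
  intro u
  induction u with
  | nil => intro d _; simp [mass]
  | cons a l ih =>
    intro d h
    simp only [List.length_cons] at h
    exact mul_pos (h d le_rfl (by omega) a) (ih (d+1) fun i h1 h2 => h i (by omega) (by omega))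

theorem aux_mass_append {V : Type*} (q : ℕ → V → ℝ) (b : V) : ∀ (u : List V) (d : ℕ),
    mass q d (u ++ [b]) = mass q d u * q (d + u.length) b := by
  intro u
  induction u with
  | nil => intro d; simp [mass]
  | cons a l ih =>
    intro d
    simp only [List.cons_append, mass, ih, List.length_cons]
    rw [show d + 1 + l.length = d + (l.length + 1) by omega, mul_assoc]

theorem aux_mass_set {V : Type*} (q : ℕ → V → ℝ) (b : V) : ∀ (u : List V) (d j : ℕ)
    (hj : j < u.length),
    (∀ i, d ≤ i → i < d + u.length → ∀ v, 0 < q i v) → q (d + j) (u[j]) ≤ q (d + j) b →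
    mass q d u ≤ mass q d (u.set j b) := by
  intro u
  induction u with
  | nil => intro d j hj; simp at hj
  | cons a l ih =>
    intro d j hj h hle
    simp only [List.length_cons] at h hj
    have h' : ∀ i, d + 1 ≤ i → i < d + 1 + l.length → ∀ v, 0 < q i v :=
      fun i h1 h2 => h i (by omega) (by omega)
    cases j with
    | zero =>
      simp only [List.set_cons_zero, mass]
      exact mul_le_mul_of_nonneg_right (by simpa using hle) (aux_mass_pos q l _ h').le
    | succ j =>
      simp only [List.set_cons_succ, mass]
      refine mul_le_mul_of_nonneg_left (ih (d+1) j (by omega) h' ?_) (h d le_rfl (by omega) a).le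
      rw [show d + 1 + j = d + (j + 1) by omega]
      simpa using hle

theorem aux_rsum_set {V : Type*} (r : ℕ → V → ℕ) (b : V) : ∀ (u : List V) (d j : ℕ)
    (hj : j < u.length), r (d + j) b < r (d + j) (u[j]) →
    auxRsum r d (u.set j b) < auxRsum r d u := by
  intro u
  induction u with
  | nil => intro d j hj; simp at hj
  | cons a l ih =>
    intro d j hj hlt
    simp only [List.length_cons] at hj
    cases j with
    | zero =>
      simp only [List.set_cons_zero, auxRsum]
      have : r d b < r d a := by simpa using hlt
      omega
    | succ j =>
      simp only [List.set_cons_succ, auxRsum]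
      have := ih (d+1) j (by omega) (by
        rw [show d + 1 + j = d + (j + 1) by omega]
        simpa using hlt)
      omega

/-- Lemma: top-`K` reduction.
Assuming `0 < qᵢ(v) < 1` everywhere, for `1 ≤ B < N` and `K = min(B, |𝒱|)`, there exists
a valid draft tree `T*` with at most `B` nodes that maximizes the surrogate expected
acceptance length among all valid draft trees with at most `B` nodes, and whose nodes all
use only the top-`K` tokens at each depth. Here `vEnum i k` is the rank-`k` token at
depth `i` in a fixed nonincreasing-probability enumeration of `𝒱`. -/
theorem exists_optimal_tree_in_top_K {V : Type*} [Fintype V] [DecidableEq V] [Nonempty V]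
    (L : ℕ) (hL : 1 ≤ L) (q : ℕ → V → ℝ)
    (hq0 : ∀ i ∈ Finset.Icc 1 L, ∀ v : V, 0 < q i v ∧ q i v < 1)
    (hq1 : ∀ i ∈ Finset.Icc 1 L, ∑ v : V, q i v = 1)
    (vEnum : ℕ → ℕ → V)
    (hbij : ∀ i ∈ Finset.Icc 1 L, Set.BijOn (vEnum i) (Set.Icc 1 (Fintype.card V)) Set.univ)
    (hmono : ∀ i ∈ Finset.Icc 1 L, ∀ k k' : ℕ, 1 ≤ k → k ≤ k' → k' ≤ Fintype.card V →
      q i (vEnum i k') ≤ q i (vEnum i k))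
    (B : ℕ) (hB : 1 ≤ B) (hBN : B < ∑ d ∈ Finset.Icc 1 L, Fintype.card V ^ d) :
    ∃ Tstar : Finset (List V), ValidTree L Tstar ∧ Tstar.card ≤ B ∧
      (∀ u ∈ Tstar, inSK vEnum L (min B (Fintype.card V)) u) ∧
      ∀ T : Finset (List V), ValidTree L T → T.card ≤ B →
        ∑ y : Fin L → V, mass q 1 (List.ofFn y) * (accLen T y : ℝ)
          ≤ ∑ y : Fin L → V, mass q 1 (List.ofFn y) * (accLen Tstar y : ℝ) := by
  classical
  have hr : ∀ i (v : V), ∃ k, i ∈ Finset.Icc 1 L →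
      (1 ≤ k ∧ k ≤ Fintype.card V ∧ vEnum i k = v) := by
    intro i v
    by_cases hi : i ∈ Finset.Icc 1 L
    · obtain ⟨k, hk, e⟩ := (hbij i hi).surjOn (Set.mem_univ v)
      exact ⟨k, fun _ => ⟨hk.1, hk.2, e⟩⟩
    · exact ⟨0, fun h => absurd h hi⟩
  choose r hr using hr
  have hrE : ∀ i ∈ Finset.Icc 1 L, ∀ k, 1 ≤ k → k ≤ Fintype.card V → r i (vEnum i k) = k := by
    intro i hi k h1 h2
    have := hr i (vEnum i k) hi
    exact (hbij i hi).injOn ⟨this.1, this.2.1⟩ ⟨h1, h2⟩ this.2.2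
  have hPfin : {l : List V | 1 ≤ l.length ∧ l.length ≤ L}.Finite :=
    (List.finite_length_le V L).subset fun l hl => hl.2
  set P := hPfin.toFinset with hP
  have memP : ∀ u, u ∈ P ↔ 1 ≤ u.length ∧ u.length ≤ L := fun u => by simp [hP]
  have hpos : ∀ u ∈ P, ∀ i, 1 ≤ i → i < 1 + u.length → ∀ v, 0 < q i v := by
    intro u hu i h1 h2 v
    rw [memP] at hu
    exact (hq0 i (Finset.mem_Icc.mpr ⟨h1, by omega⟩) v).1
  let F : Finset (List V) → ℝ ×ₗ ℤ := fun T =>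
    toLex (∑ u ∈ T, mass q 1 u, - ∑ u ∈ T, (auxRsum r 1 u : ℤ))
  obtain ⟨T, hTm, hTmax⟩ := Finset.exists_max_image (P.powerset.filter (fun T => T.card ≤ B)) F
    ⟨∅, by simp⟩
  simp only [Finset.mem_filter, Finset.mem_powerset] at hTm hTmax
  obtain ⟨hTP, hTB⟩ := hTm
  have exch : ∀ u ∈ T, ∀ w ∈ P, (mass q 1 u < mass q 1 w ∨
      (mass q 1 u ≤ mass q 1 w ∧ auxRsum r 1 w < auxRsum r 1 u)) → w ∈ T := by
    intro u hu w hw hlt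
    by_contra hwT
    have hwE : w ∉ T.erase u := fun h => hwT (Finset.mem_of_mem_erase h)
    have := hTmax (insert w (T.erase u)) ⟨?_, ?_⟩
    · simp only [F, Finset.sum_insert hwE] at this
      have e1 := Finset.add_sum_erase T (fun u => mass q 1 u) hu
      have e2 := Finset.add_sum_erase T (fun u => (auxRsum r 1 u : ℤ)) hu
      rw [← e1, ← e2, Prod.Lex.toLex_le_toLex] at this
      simp only at this
      rcases hlt with h | ⟨h, h'⟩
      · rcases this with h2 | ⟨h2, _⟩ <;> linarith
      · have h'' : (auxRsum r 1 w : ℤ) < auxRsum r 1 u := by exact_mod_cast h'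
        rcases this with h2 | ⟨_, h2⟩ <;> linarith
    · intro x hx
      rw [Finset.mem_insert] at hx
      rcases hx with rfl | hx
      · exact hw
      · exact hTP (Finset.mem_of_mem_erase hx)
    · rw [Finset.card_insert_of_notMem hwE, Finset.card_erase_of_mem hu]
      have := Finset.card_pos.mpr ⟨u, hu⟩
      omega
  have hTV : ValidTree L T := by
    refine ⟨fun u hu => (memP u).mp (hTP hu), fun u hu h2 => ?_⟩
    have huP := (memP u).mp (hTP hu)
    have hdP : u.dropLast ∈ P := by
      rw [memP, List.length_dropLast]; omega
    refine exch u hu _ hdP (Or.inl ?_)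
    have hne : u ≠ [] := by rintro rfl; simp at h2
    have e := aux_mass_append q (u.getLast hne) u.dropLast 1
    rw [List.dropLast_append_getLast hne] at e
    rw [e]
    have p := aux_mass_pos q u.dropLast 1 (hpos _ hdP)
    have := (hq0 (1 + u.dropLast.length)
      (Finset.mem_Icc.mpr ⟨by omega, by rw [List.length_dropLast]; omega⟩) (u.getLast hne)).2
    exact mul_lt_of_lt_one_right p this
  refine ⟨T, hTV, hTB, ?_, ?_⟩
  · intro u hu
    have huP := (memP u).mp (hTP hu)
    refine ⟨huP.1, huP.2, fun j => ?_⟩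
    have hi : (j : ℕ) + 1 ∈ Finset.Icc 1 L := Finset.mem_Icc.mpr ⟨by omega, by omega⟩
    obtain ⟨a1, a2, a3⟩ := hr (j + 1) (u.get j) hi
    refine ⟨r (j + 1) (u.get j), a1, le_min ?_ a2, a3⟩
    set k0 := r (j + 1) (u.get j) with hk0
    have hcard : ((Finset.Icc 1 k0).image (fun k => u.set j (vEnum (j + 1) k))).card = k0 := by
      rw [Finset.card_image_of_injOn]
      · simp
      · intro a ha b hb hab
        simp only [Finset.coe_Icc, Set.mem_Icc] at ha hb
        have h3 : vEnum (j + 1) a = vEnum (j + 1) b := by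
          have := congrArg (fun l => l[(j : ℕ)]?) hab
          simpa using this
        exact (hbij _ hi).injOn ⟨ha.1, by omega⟩ ⟨hb.1, by omega⟩ h3
    rw [← hcard]
    refine (Finset.card_le_card ?_).trans hTB
    intro w hw
    rw [Finset.mem_image] at hw
    obtain ⟨k, hk, rfl⟩ := hw
    rw [Finset.mem_Icc] at hk
    rcases Nat.lt_or_ge k k0 with hlt | hge
    · refine exch u hu _ (by rw [memP, List.length_set]; exact huP) (Or.inr ⟨?_, ?_⟩)
      · refine aux_mass_set q _ u 1 j j.2 (hpos u (hTP hu)) ?_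
        rw [add_comm 1 (j : ℕ)]
        have := hmono _ hi k k0 hk.1 hk.2 a2
        rw [a3] at this
        exact this
      · refine aux_rsum_set r _ u 1 j j.2 ?_
        rw [add_comm 1 (j : ℕ), hrE _ hi k hk.1 (by omega)]
        exact hlt
    · have : k = k0 := by omega
      rw [this, a3]
      simpa using hu
  · intro T' hT' hB'
    rw [aux_obj q hq1 hT', aux_obj q hq1 hTV]
    have := hTmax T' ⟨fun u hu => (memP u).mpr (hT'.1 u hu), hB'⟩
    simp only [F, Prod.Lex.toLex_le_toLex] at this
    rcases this with h | ⟨h, _⟩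
    · exact h.le
    · exact h.le
end

section
/- Let B ≥ 1 with B < |𝒱|. If u = (u_1,…,u_d) is a prefix such that the rank of u_j at depth j exceeds B for at least one j ∈ {1,…,d} (i.e. u ∉ S_B), then there exist B pairwise distinct prefixes w^{(1)},…,w^{(B)} ∈ S_B, each of length d, with q(w^{(k)}) ≥ q(u) for every k ∈ {1,…,B}. -/
theorem mass_ofFn {V : Type*} (q : ℕ → V → ℝ) (n : ℕ) : ∀ (d : ℕ) (f : Fin n → V),
    mass q d (List.ofFn f) = ∏ i : Fin n, q (d + (i : ℕ)) (f i) := by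
  induction n with
  | zero => intro d f; simp [mass]
  | succ n ih =>
    intro d f
    rw [List.ofFn_succ, mass, ih, Fin.prod_univ_succ]
    congr 1
    apply Finset.prod_congr rfl
    intro i _
    rw [Fin.val_succ, add_assoc, add_comm 1]

/-- let `1 ≤ B < |𝒱|`. If `u` is a prefix that uses a token of rank
exceeding `B` at some depth (i.e. `u ∉ S_B`), then there exist `B` pairwise distinct
prefixes in `S_B`, each of the same length as `u`, whose masses all dominate that of `u`.
Here `vEnum i k` is the rank-`k` token at depth `i` in a fixed
nonincreasing-probability enumeration of `𝒱`. -/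
theorem exists_B_dominating_prefixes_in_SB {V : Type*} [Fintype V] [Nonempty V]
    (L : ℕ) (hL : 1 ≤ L) (q : ℕ → V → ℝ)
    (hq0 : ∀ i ∈ Finset.Icc 1 L, ∀ v : V, 0 ≤ q i v)
    (hq1 : ∀ i ∈ Finset.Icc 1 L, ∑ v : V, q i v = 1)
    (vEnum : ℕ → ℕ → V)
    (hbij : ∀ i ∈ Finset.Icc 1 L, Set.BijOn (vEnum i) (Set.Icc 1 (Fintype.card V)) Set.univ)
    (hmono : ∀ i ∈ Finset.Icc 1 L, ∀ k k' : ℕ, 1 ≤ k → k ≤ k' → k' ≤ Fintype.card V →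
      q i (vEnum i k') ≤ q i (vEnum i k))
    (B : ℕ) (hB : 1 ≤ B) (hBV : B < Fintype.card V)
    (u : List V) (hu : 1 ≤ u.length ∧ u.length ≤ L)
    (hnot : ∃ j : Fin u.length, ∀ k, 1 ≤ k → k ≤ B → vEnum ((j : ℕ) + 1) k ≠ u.get j) :
    ∃ w : Fin B → List V, Function.Injective w ∧
      ∀ k : Fin B, inSK vEnum L B (w k) ∧ (w k).length = u.length ∧
        mass q 1 u ≤ mass q 1 (w k) := by
  classical
  obtain ⟨j, hj⟩ := hnot
  have hI : ∀ i : Fin u.length, (i : ℕ) + 1 ∈ Finset.Icc 1 L := fun i => by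
    have := i.2
    rw [Finset.mem_Icc]; omega
  let f : Fin B → Fin u.length → V := fun k i =>
    vEnum ((i : ℕ) + 1) (if i = j then (k : ℕ) + 1 else 1)
  refine ⟨fun k => List.ofFn (f k), ?_, ?_⟩
  · intro a b hab
    have h1 : f a = f b := List.ofFn_injective hab
    have h2 := congrFun h1 j
    simp only [f, if_true] at h2
    have ha := a.2
    have hb := b.2
    have h3 := (hbij _ (hI j)).injOn (Set.mem_Icc.2 ⟨by omega, by omega⟩)
      (Set.mem_Icc.2 ⟨by omega, by omega⟩) h2
    exact Fin.ext (by omega)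
  · intro k
    have hk := k.2
    refine ⟨⟨by simpa using hu.1, by simpa using hu.2, ?_⟩, by simp, ?_⟩
    · intro i
      have hi : (i : ℕ) < u.length := by simpa using i.2
      refine ⟨if (⟨i, hi⟩ : Fin u.length) = j then (k : ℕ) + 1 else 1, ?_, ?_, ?_⟩
      · split_ifs <;> omega
      · split_ifs <;> omega
      · simp [f]
    · have hU : mass q 1 u = mass q 1 (List.ofFn u.get) := by rw [List.ofFn_get]
      rw [hU, mass_ofFn, mass_ofFn]
      apply Finset.prod_le_prod
      · intro i _
        rw [add_comm]
        exact hq0 _ (hI i) _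
      · intro i _
        rw [add_comm 1]
        obtain ⟨r, hr, hru⟩ := (hbij _ (hI i)).surjOn (Set.mem_univ (u.get i))
        rw [Set.mem_Icc] at hr
        rw [← hru]
        apply hmono _ (hI i) _ _ _ _ hr.2
        · split_ifs <;> omega
        · split_ifs with h
          · subst h
            by_contra hlt
            exact hj r hr.1 (by omega) hru
          · exact hr.1
end
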